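/- arXiv:2104.08426 — 9 statements merged into one kernel-verified Lean document; each statement's English description precedes it below -/
import Mathlib

section
/- Let E be a real inner product space and x₀ ∈ E. Suppose φ : E → ℝ satisfies φ(x₀) = 0, φ is differentiable at x₀, the gradient map x ↦ ∇φ(x) is differentiable at x₀, and ‖∇φ(x₀)‖ = 1 (so ν := ∇φ(x₀) is the unit inward normal at the boundary point x₀). Let u : E → ℝ be differentiable at x₀ and define the transformed function u*(x) = u(x − φ(x)·∇φ(x)). Then u*(x₀) = u(x₀) and the directional derivative of u* at x₀ in the direction ν vanishes: D u*(x₀)[∇φ(x₀)] = 0. In other words, the Kantorovich/Rvachev transform u* is normalized to first order at x₀. -/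
open RealInnerProductSpace

/-!
Since `φ x₀ = 0`, the map `T x = x - φ x • ∇φ x` fixes `x₀`, and by the product rule its derivative
there is `h ↦ h - ⟪ν, h⟫ • ν` with `ν = ∇φ x₀`. As `‖ν‖ = 1`, this is the orthogonal projection
that annihilates `ν`, and the chain rule for `u ∘ T` gives the result.
-/

/-- The Kantorovich/Rvachev transform `u*(x) = u(x − φ(x)·∇φ(x))` is normalized to first
order at a boundary point `x₀` where `φ(x₀) = 0` and `‖∇φ(x₀)‖ = 1`: it agrees with `u`
at `x₀` and its directional derivative in the normal direction `ν = ∇φ(x₀)` vanishes. -/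
theorem kantorovich_transform_first_order_normalization
    {E : Type*} [NormedAddCommGroup E] [InnerProductSpace ℝ E] [CompleteSpace E]
    (φ u : E → ℝ) (x₀ : E)
    (hφ0 : φ x₀ = 0)
    (hφ : DifferentiableAt ℝ φ x₀)
    (hgrad : DifferentiableAt ℝ (fun x => gradient φ x) x₀)
    (hnorm : ‖gradient φ x₀‖ = 1)
    (hu : DifferentiableAt ℝ u x₀) :
    (fun x => u (x - φ x • gradient φ x)) x₀ = u x₀ ∧
      fderiv ℝ (fun x => u (x - φ x • gradient φ x)) x₀ (gradient φ x₀) = 0 := by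
  have hφ' : HasFDerivAt φ (InnerProductSpace.toDual ℝ E (gradient φ x₀)) x₀ :=
    hφ.hasGradientAt.hasFDerivAt
  have hν : fderiv ℝ φ x₀ (gradient φ x₀) = 1 := by
    rw [hφ'.fderiv, InnerProductSpace.toDual_apply_apply, real_inner_self_eq_norm_sq, hnorm,
      one_pow]
  have hp : x₀ - φ x₀ • gradient φ x₀ = x₀ := by simp [hφ0]
  refine ⟨congrArg u hp, ?_⟩
  have hT := (hasFDerivAt_id (𝕜 := ℝ) x₀).sub (hφ'.smul hgrad.hasFDerivAt)
  have hu' : HasFDerivAt u (fderiv ℝ u x₀) (x₀ - φ x₀ • gradient φ x₀) := by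
    rw [hp]
    exact hu.hasFDerivAt
  have hcomp : HasFDerivAt (fun x => u (x - φ x • gradient φ x)) _ x₀ := hu'.comp x₀ hT
  rw [hcomp.fderiv]
  -- The inner derivative sends `ν` to `ν - ⟪ν, ν⟫ • ν = 0`, since `φ x₀ = 0`
  -- kills the `D(∇φ)` term.
  simp [hφ0, hν]
end

section
/- Let E be a real inner product space and x₀ ∈ E. Suppose φ : E → ℝ satisfies φ(x₀) = 0, ‖∇φ(x₀)‖ = 1, and both φ and ũ₁ : E → ℝ are differentiable at x₀ with gradient maps x ↦ ∇φ(x) and x ↦ ∇ũ₁(x) differentiable at x₀; let c, h, ũ₂ : E → ℝ be differentiable at x₀. Define the Rvachev solution structure for the Robin boundary condition u(x) = ũ₁(x) + φ(x)·( c(x)·ũ₁(x) − ⟨∇φ(x), ∇ũ₁(x)⟩ ) − φ(x)·h(x) + φ(x)²·ũ₂(x). Then u(x₀) = ũ₁(x₀) and, with n := −∇φ(x₀) the unit outward normal at x₀, the Robin boundary condition holds exactly at x₀: ⟨∇u(x₀), n⟩ + c(x₀)·u(x₀) = h(x₀). -/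
/-!
Since `φ` vanishes at `x₀`, factoring it out as `u = u₁ + φ · G` with
`G = c u₁ - ⟪∇φ, ∇u₁⟫ - h + φ u₂` gives `u x₀ = u₁ x₀` and `∇u = ∇u₁ + G x₀ • ∇φ` at `x₀`:
the derivative of `G` does not contribute. Pairing with `-∇φ` and using `‖∇φ‖ = 1` yields
`-⟪∇u₁, ∇φ⟫ - G x₀ = h x₀ - c x₀ * u₁ x₀`.
-/

open RealInnerProductSpace

/-- The Rvachev solution structure for a Robin boundary condition,
`u = ũ₁ + φ·(c·ũ₁ − ⟨∇φ, ∇ũ₁⟩) − φ·h + φ²·ũ₂`, agrees with `ũ₁` at a boundary point `x₀`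
(where `φ(x₀) = 0`, `‖∇φ(x₀)‖ = 1`) and satisfies the Robin condition
`∂u/∂n + c·u = h` exactly there, with `n = −∇φ(x₀)` the unit outward normal. -/
theorem robin_solution_structure_exact
    {E : Type*} [NormedAddCommGroup E] [InnerProductSpace ℝ E] [CompleteSpace E]
    (φ u₁ c h u₂ : E → ℝ) (x₀ : E)
    (hφ0 : φ x₀ = 0)
    (hnorm : ‖gradient φ x₀‖ = 1)
    (hφ : DifferentiableAt ℝ φ x₀)
    (hu₁ : DifferentiableAt ℝ u₁ x₀)
    (hgradφ : DifferentiableAt ℝ (fun x => gradient φ x) x₀)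
    (hgradu₁ : DifferentiableAt ℝ (fun x => gradient u₁ x) x₀)
    (hc : DifferentiableAt ℝ c x₀)
    (hh : DifferentiableAt ℝ h x₀)
    (hu₂ : DifferentiableAt ℝ u₂ x₀)
    (u : E → ℝ)
    (hu : u = fun x =>
      u₁ x + φ x * (c x * u₁ x - ⟪gradient φ x, gradient u₁ x⟫) -
        φ x * h x + φ x ^ 2 * u₂ x) :
    u x₀ = u₁ x₀ ∧
      ⟪gradient u x₀, -gradient φ x₀⟫ + c x₀ * u x₀ = h x₀ := by
  -- `u = u₁ + φ · G`, where `G` is the following function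
  set G : E → ℝ := fun x =>
    c x * u₁ x - ⟪gradient φ x, gradient u₁ x⟫ - h x + φ x * u₂ x with hG
  have hGd : DifferentiableAt ℝ G x₀ :=
    (((hc.mul hu₁).sub (hgradφ.inner ℝ hgradu₁)).sub hh).add (hφ.mul hu₂)
  have huG : u = fun x => u₁ x + φ x * G x := by
    rw [hu]; funext x; simp only [hG]; ring
  have hval : u x₀ = u₁ x₀ := by simp [huG, hφ0]
  have hgrad : HasGradientAt u (gradient u₁ x₀ + G x₀ • gradient φ x₀) x₀ := by
    have h1 := hu₁.hasGradientAt.hasFDerivAt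
    have h2 := hφ.hasGradientAt.hasFDerivAt
    rw [hasGradientAt_iff_hasFDerivAt, huG]
    refine (h1.add (h2.mul hGd.hasFDerivAt)).congr_fderiv ?_
    ext v
    simp [hφ0]
  refine ⟨hval, ?_⟩
  have hsq : ⟪gradient φ x₀, gradient φ x₀⟫ = 1 := by
    rw [real_inner_self_eq_norm_sq, hnorm, one_pow]
  rw [hgrad.gradient, hval, inner_neg_right, inner_add_left, real_inner_smul_left, hsq,
    real_inner_comm (gradient φ x₀) (gradient u₁ x₀)]
  simp only [hG, hφ0]
  ring
end

section
/- Let E be a real inner product space and x₀ ∈ E. Suppose φ : E → ℝ satisfies φ(x₀) = 0, ‖∇φ(x₀)‖ = 1, and both φ and ũ₁ : E → ℝ are differentiable at x₀ with gradient maps x ↦ ∇φ(x) and x ↦ ∇ũ₁(x) differentiable at x₀; let h, ũ₂ : E → ℝ be differentiable at x₀. Define the Rvachev solution structure for the Neumann boundary condition u(x) = ũ₁(x) − φ(x)·⟨∇φ(x), ∇ũ₁(x)⟩ − φ(x)·h(x) + φ(x)²·ũ₂(x). Then, with n := −∇φ(x₀) the unit outward normal at x₀, the Neumann boundary condition holds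 exactly at x₀: ⟨∇u(x₀), n⟩ = h(x₀). -/
/-!
At `x₀` the function `φ` vanishes, so by the product rule `φ * g` has gradient `g(x₀) ∇φ(x₀)` there,
and the gradient of `φ ^ 2 * ũ₂` is zero. Hence
`∇u(x₀) = ∇ũ₁(x₀) - (⟪∇φ(x₀), ∇ũ₁(x₀)⟫ + h(x₀)) ∇φ(x₀)`. Pairing with `-∇φ(x₀)`, a unit vector,
cancels the two occurrences of `⟪∇φ(x₀), ∇ũ₁(x₀)⟫` and leaves `h(x₀)`. Differentiability of the
gradient maps enters only in making `x ↦ ⟪∇φ(x), ∇ũ₁(x)⟫` differentiable at `x₀`.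
-/

open RealInnerProductSpace

/-- The Rvachev solution structure for a Neumann boundary condition,
`u = ũ₁ − φ·⟨∇φ, ∇ũ₁⟩ − φ·h + φ²·ũ₂`, satisfies the Neumann condition `∂u/∂n = h`
exactly at a boundary point `x₀` where `φ(x₀) = 0` and `‖∇φ(x₀)‖ = 1`, with
`n = −∇φ(x₀)` the unit outward normal. -/
theorem neumann_solution_structure_exact
    {E : Type*} [NormedAddCommGroup E] [InnerProductSpace ℝ E] [CompleteSpace E]
    (φ u₁ h u₂ : E → ℝ) (x₀ : E)
    (hφ0 : φ x₀ = 0)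
    (hnorm : ‖gradient φ x₀‖ = 1)
    (hφ : DifferentiableAt ℝ φ x₀)
    (hu₁ : DifferentiableAt ℝ u₁ x₀)
    (hgradφ : DifferentiableAt ℝ (fun x => gradient φ x) x₀)
    (hgradu₁ : DifferentiableAt ℝ (fun x => gradient u₁ x) x₀)
    (hh : DifferentiableAt ℝ h x₀)
    (hu₂ : DifferentiableAt ℝ u₂ x₀)
    (u : E → ℝ)
    (hu : u = fun x =>
      u₁ x - φ x * ⟪gradient φ x, gradient u₁ x⟫ - φ x * h x + φ x ^ 2 * u₂ x) :
    ⟪gradient u x₀, -gradient φ x₀⟫ = h x₀ := by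
  have hI : DifferentiableAt ℝ (fun x => ⟪gradient φ x, gradient u₁ x⟫) x₀ :=
    hgradφ.inner ℝ hgradu₁
  have hd := (((hu₁.hasFDerivAt.sub (hφ.hasFDerivAt.mul hI.hasFDerivAt)).sub
    (hφ.hasFDerivAt.mul hh.hasFDerivAt)).add
    ((hφ.hasFDerivAt.pow 2).mul hu₂.hasFDerivAt))
  have hdu := hd.congr_of_eventuallyEq (f₁ := u) (Filter.EventuallyEq.of_eq (by rw [hu]; rfl))
  have hself : ⟪gradient φ x₀, gradient φ x₀⟫ = 1 := by
    rw [real_inner_self_eq_norm_sq, hnorm, one_pow]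
  have hφ' : fderiv ℝ φ x₀ (gradient φ x₀) = 1 := by
    rw [← hself, gradient, InnerProductSpace.toDual_symm_apply]
  have hu₁' : fderiv ℝ u₁ x₀ (gradient φ x₀) = ⟪gradient φ x₀, gradient u₁ x₀⟫ := by
    rw [real_inner_comm, gradient.eq_1 u₁, InnerProductSpace.toDual_symm_apply]
  rw [inner_neg_right, gradient.eq_1 u, InnerProductSpace.toDual_symm_apply, hdu.fderiv]
  simp only [add_apply, sub_apply, smul_apply, smul_eq_mul, hφ0, hφ', hu₁']
  ring
end

section
/- Let α be a real number with −1 < α ≤ 1 and let ω₁, ω₂ be real numbers. Then (i) ω₁² + ω₂² − 2αω₁ω₂ ≥ 0, so the R-conjunction R_α(ω₁, ω₂) = (ω₁ + ω₂ − √(ω₁² + ω₂² − 2αω₁ω₂))/(1 + α) is well defined; and (ii) R_α(ω₁, ω₂) > 0 if and only if ω₁ > 0 and ω₂ > 0. Hence R_α with the minus sign encodes the Boolean conjunction (set intersection): it is an R-function. -/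
/-! The radicand is the nonnegative combination `(1 + α)/2 · (ω₁ - ω₂)² + (1 - α)/2 · (ω₁ + ω₂)²`.
Moreover `(ω₁ + ω₂)²` exceeds it by exactly `2 (1 + α) ω₁ ω₂`, so `√(radicand) < ω₁ + ω₂` holds iff
both the sum and the product of `ω₁`, `ω₂` are positive, i.e. iff both numbers are positive. -/

/-- For `−1 < α ≤ 1`, the R-conjunction
`R_α(ω₁, ω₂) = (ω₁ + ω₂ − √(ω₁² + ω₂² − 2αω₁ω₂))/(1 + α)` is well defined
(the radicand is nonnegative) and is positive iff both arguments are positive: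
it encodes Boolean conjunction, i.e. it is an R-function. -/
theorem r_conjunction_alpha_is_R_function
    (α : ℝ) (hα₁ : -1 < α) (hα₂ : α ≤ 1) (ω₁ ω₂ : ℝ) :
    0 ≤ ω₁ ^ 2 + ω₂ ^ 2 - 2 * α * ω₁ * ω₂ ∧
      (0 < (ω₁ + ω₂ - Real.sqrt (ω₁ ^ 2 + ω₂ ^ 2 - 2 * α * ω₁ * ω₂)) / (1 + α) ↔
        0 < ω₁ ∧ 0 < ω₂) := by
  have h : 0 < 1 + α := by linarith
  constructor
  · have h₁ := mul_nonneg h.le (sq_nonneg (ω₁ - ω₂))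
    have h₂ := mul_nonneg (sub_nonneg.2 hα₂) (sq_nonneg (ω₁ + ω₂))
    linarith
  rw [div_pos_iff_of_pos_right h, sub_pos]
  constructor
  · intro hlt
    have hsum : 0 < ω₁ + ω₂ := (Real.sqrt_nonneg _).trans_lt hlt
    rw [Real.sqrt_lt' hsum] at hlt
    have hprod : 0 < ω₁ * ω₂ := pos_of_mul_pos_right (a := 1 + α) (by linarith) h.le
    rcases mul_pos_iff.1 hprod with hpos | ⟨hn₁, hn₂⟩
    · exact hpos
    · linarith
  · rintro ⟨h₁, h₂⟩
    rw [Real.sqrt_lt' (add_pos h₁ h₂)]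
    have hprod := mul_pos h (mul_pos h₁ h₂)
    linarith
end

section
/- Let α be a real number with −1 < α ≤ 1 and let ω₁, ω₂ be real numbers. Then the R-disjunction R_α(ω₁, ω₂) = (ω₁ + ω₂ + √(ω₁² + ω₂² − 2αω₁ω₂))/(1 + α) satisfies R_α(ω₁, ω₂) > 0 if and only if ω₁ > 0 or ω₂ > 0. Hence R_α with the plus sign encodes the Boolean disjunction (set union): it is an R-function. -/
/-! The radicand equals `(ω₁ + ω₂)² − 2(1 + α)ω₁ω₂`, and `1 + α > 0`, so the sign of `ω₁ω₂` decides
how the square root compares with `|ω₁ + ω₂|`. If both arguments are nonpositive, then `ω₁ω₂ ≥ 0`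
and the root is at most `-(ω₁ + ω₂)`. If one is positive, either the sum is positive, or
the other argument is negative, so `ω₁ω₂ < 0` and the root exceeds `-(ω₁ + ω₂)`. -/

theorem numerator_pos_of_left_pos {α : ℝ} (hα : -1 < α) {a : ℝ} (b : ℝ) (ha : 0 < a) :
    0 < a + b + Real.sqrt (a ^ 2 + b ^ 2 - 2 * α * a * b) := by
  rcases lt_or_ge 0 (a + b) with h | h
  · positivity
  · have hab : 0 < a * -b := mul_pos ha (by linarith)
    have hs : -(a + b) < Real.sqrt (a ^ 2 + b ^ 2 - 2 * α * a * b) := by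
      apply Real.lt_sqrt_of_sq_lt
      nlinarith [mul_pos (show 0 < 1 + α by linarith) hab]
    linarith

/-- For `−1 < α ≤ 1`, the R-disjunction
`R_α(ω₁, ω₂) = (ω₁ + ω₂ + √(ω₁² + ω₂² − 2αω₁ω₂))/(1 + α)` is positive iff at least one
argument is positive: it encodes Boolean disjunction, i.e. it is an R-function. -/
theorem r_disjunction_alpha_is_R_function
    (α : ℝ) (hα₁ : -1 < α) (hα₂ : α ≤ 1) (ω₁ ω₂ : ℝ) :
    0 < (ω₁ + ω₂ + Real.sqrt (ω₁ ^ 2 + ω₂ ^ 2 - 2 * α * ω₁ * ω₂)) / (1 + α) ↔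
      0 < ω₁ ∨ 0 < ω₂ := by
  have hα : 0 < 1 + α := by linarith
  rw [div_pos_iff_of_pos_right hα]
  constructor
  · contrapose!
    rintro ⟨h₁, h₂⟩
    have hs : Real.sqrt (ω₁ ^ 2 + ω₂ ^ 2 - 2 * α * ω₁ * ω₂) ≤ -(ω₁ + ω₂) := by
      apply Real.sqrt_le_iff.mpr
      refine ⟨by linarith, ?_⟩
      nlinarith [mul_nonneg hα.le (mul_nonneg_of_nonpos_of_nonpos h₁ h₂)]
    linarith
  · rintro (h | h)
    · exact numerator_pos_of_left_pos hα₁ ω₂ h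
    · rw [add_comm ω₁ ω₂, show ω₁ ^ 2 + ω₂ ^ 2 - 2 * α * ω₁ * ω₂ =
        ω₂ ^ 2 + ω₁ ^ 2 - 2 * α * ω₂ * ω₁ by ring]
      exact numerator_pos_of_left_pos hα₁ ω₁ h
end

section
/- Let E be a real normed vector space, x₀ ∈ E, and let m ≥ 1 be a natural number. Suppose φ₁, φ₂ : E → ℝ are differentiable at x₀ with φ₁(x₀) = 0 and φ₂(x₀) > 0. Define the R-equivalence composition φ(x) = φ₁(x)·φ₂(x) / (φ₁(x)^m + φ₂(x)^m)^(1/m) (real m-th root). Then φ(x₀) = 0 and Dφ(x₀) = Dφ₁(x₀) (the Fréchet derivatives coincide). In particular, if the gradient of φ₁ at x₀ is the unit inward normal (‖∇φ₁(x₀)‖ = 1), then the R-equivalence composition φ is also normalized to first order at x₀: its normal derivative there equals 1. -/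
/-! Write the composition as `φ₁ · g` with `g = φ₂ / (φ₁^m + φ₂^m)^(1/m)`. Since
`φ₁ x₀ = 0 < φ₂ x₀`, the base of the root equals `φ₂ x₀ ^ m > 0` at `x₀`, so `g` is differentiable
there and `g x₀ = φ₂ x₀ / φ₂ x₀ = 1`. The product rule gives
`D(φ₁ g) = φ₁ x₀ • Dg + g x₀ • Dφ₁ = Dφ₁`. -/

/-- At a regular point `x₀` of the first boundary piece (`φ₁(x₀) = 0`, `φ₂(x₀) > 0`),
the R-equivalence composition `φ = φ₁·φ₂ / (φ₁^m + φ₂^m)^(1/m)` vanishes and its Fréchet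
derivative coincides with that of `φ₁`; in particular it preserves first-order
normalization of `φ₁` at `x₀`. -/
theorem r_equivalence_preserves_normalization
    {E : Type*} [NormedAddCommGroup E] [NormedSpace ℝ E]
    (φ₁ φ₂ : E → ℝ) (x₀ : E) (m : ℕ) (hm : 1 ≤ m)
    (h₁ : DifferentiableAt ℝ φ₁ x₀)
    (h₂ : DifferentiableAt ℝ φ₂ x₀)
    (h₁0 : φ₁ x₀ = 0)
    (h₂0 : 0 < φ₂ x₀) :
    (fun x => φ₁ x * φ₂ x / (φ₁ x ^ m + φ₂ x ^ m) ^ ((1 : ℝ) / (m : ℝ))) x₀ = 0 ∧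
      fderiv ℝ (fun x => φ₁ x * φ₂ x / (φ₁ x ^ m + φ₂ x ^ m) ^ ((1 : ℝ) / (m : ℝ))) x₀ =
        fderiv ℝ φ₁ x₀ := by
  have hm0 : m ≠ 0 := by omega
  have hbase : φ₁ x₀ ^ m + φ₂ x₀ ^ m = φ₂ x₀ ^ m := by simp [h₁0, hm0]
  have hroot : (φ₁ x₀ ^ m + φ₂ x₀ ^ m) ^ ((1 : ℝ) / (m : ℝ)) = φ₂ x₀ := by
    rw [hbase, one_div, Real.pow_rpow_inv_natCast h₂0.le hm0]
  have hbase_ne : φ₁ x₀ ^ m + φ₂ x₀ ^ m ≠ 0 := by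
    rw [hbase]
    exact (pow_pos h₂0 m).ne'
  have hden : DifferentiableAt ℝ
      (fun x => (φ₁ x ^ m + φ₂ x ^ m) ^ ((1 : ℝ) / (m : ℝ))) x₀ :=
    ((h₁.fun_pow m).fun_add (h₂.fun_pow m)).rpow_const (Or.inl hbase_ne)
  have hg : DifferentiableAt ℝ
      (fun x => φ₂ x / (φ₁ x ^ m + φ₂ x ^ m) ^ ((1 : ℝ) / (m : ℝ))) x₀ := by
    simp only [div_eq_mul_inv _ (_ ^ (_ : ℝ))]
    exact h₂.fun_mul (hden.fun_inv (hroot.trans_ne h₂0.ne'))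
  refine ⟨by simp [h₁0], ?_⟩
  simp only [mul_div_assoc]
  rw [fderiv_fun_mul h₁ hg, hroot, h₁0, div_self h₂0.ne', zero_smul, one_smul, zero_add]
end

section
/- Let E be a real normed vector space, x₀ ∈ E, and suppose φ₁, φ₂ : E → ℝ are differentiable at x₀ with φ₁(x₀) = 0 and φ₂(x₀) > 0. Define the R-conjunction joining φ_s(x) = φ₁(x) + φ₂(x) − √(φ₁(x)² + φ₂(x)²) (the case s = 2). Then φ_s(x₀) = 0 and Dφ_s(x₀) = Dφ₁(x₀). In particular, if ‖∇φ₁(x₀)‖ = 1 then φ_s is normalized to first order at x₀ (the s = 2 instance of the statement that φ_s(φ₁, φ₂) = φ₁ + φ₂ − (φ₁^s + φ₂^s)^(1/s) is normalized to the (s−1)-th order). -/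
/-!
At `x₀` the chain rule gives `D√(φ₁² + φ₂²) = (φ₁ Dφ₁ + φ₂ Dφ₂) / √(φ₁² + φ₂²)`. Since `φ₁ x₀ = 0`
and `φ₂ x₀ > 0`, the square root equals `φ₂ x₀` there and its derivative is `Dφ₂ x₀`, so both the
value and the derivative of the root cancel the contribution of `φ₂`.
-/

/-- At a regular point `x₀` of the first boundary piece (`φ₁(x₀) = 0`, `φ₂(x₀) > 0`),
the R-conjunction joining `φ_s = φ₁ + φ₂ − √(φ₁² + φ₂²)` (the case `s = 2`) vanishes
and its Fréchet derivative coincides with that of `φ₁`; in particular it preserves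
first-order normalization of `φ₁` at `x₀`. -/
theorem r_conjunction_joining_preserves_normalization
    {E : Type*} [NormedAddCommGroup E] [NormedSpace ℝ E]
    (φ₁ φ₂ : E → ℝ) (x₀ : E)
    (h₁ : DifferentiableAt ℝ φ₁ x₀)
    (h₂ : DifferentiableAt ℝ φ₂ x₀)
    (h₁0 : φ₁ x₀ = 0)
    (h₂0 : 0 < φ₂ x₀) :
    (fun x => φ₁ x + φ₂ x - Real.sqrt (φ₁ x ^ 2 + φ₂ x ^ 2)) x₀ = 0 ∧
      fderiv ℝ (fun x => φ₁ x + φ₂ x - Real.sqrt (φ₁ x ^ 2 + φ₂ x ^ 2)) x₀ =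
        fderiv ℝ φ₁ x₀ := by
  refine ⟨by simp [h₁0, Real.sqrt_sq h₂0.le], ?_⟩
  -- the radicand is positive at `x₀`, so the square root is differentiable there
  have hne : φ₁ x₀ ^ 2 + φ₂ x₀ ^ 2 ≠ 0 := by positivity
  have hd := (h₁.hasFDerivAt.add h₂.hasFDerivAt).sub
    (((h₁.hasFDerivAt.pow 2).add (h₂.hasFDerivAt.pow 2)).sqrt hne)
  refine HasFDerivAt.fderiv (hd.congr_fderiv ?_)
  ext v
  simp [h₁0, Real.sqrt_sq h₂0.le]
  field_simp
  ring
end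

section
/- Let E be a real inner product space and let ω : E → ℝ be differentiable, with its gradient map x ↦ ∇ω(x) differentiable at a point x₀ where ω(x₀) = 0 and ∇ω(x₀) ≠ 0. Define φ(x) = ω(x)/√(ω(x)² + ‖∇ω(x)‖²). Then φ(x₀) = 0 and ∇φ(x₀) = ∇ω(x₀)/‖∇ω(x₀)‖; in particular ‖∇φ(x₀)‖ = 1, so φ is normalized to first order at x₀: its derivative in the direction of the unit inward normal ν = ∇ω(x₀)/‖∇ω(x₀)‖ equals 1. -/
open RealInnerProductSpace

/-!
Write `φ = ω · g` with `g = 1/√(ω² + ‖∇ω‖²)`. Because `∇ω(x₀) ≠ 0`, the factor `g` is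
differentiable at `x₀`, so `∇φ(x₀) = g(x₀) ∇ω(x₀) + ω(x₀) ∇g(x₀)`. With `ω(x₀) = 0` the second
term vanishes and `g(x₀) = 1/‖∇ω(x₀)‖`.
-/

/-- If `ω(x₀) = 0` and `∇ω(x₀) ≠ 0`, then `φ = ω/√(ω² + ‖∇ω‖²)` vanishes at `x₀` and its
gradient there is the unit vector `∇ω(x₀)/‖∇ω(x₀)‖`; in particular `‖∇φ(x₀)‖ = 1`, so `φ`
is normalized to first order at `x₀`. -/
theorem normalized_adf_from_implicit_function
    {E : Type*} [NormedAddCommGroup E] [InnerProductSpace ℝ E] [CompleteSpace E]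
    (ω : E → ℝ) (x₀ : E)
    (hω : Differentiable ℝ ω)
    (hgrad : DifferentiableAt ℝ (fun x => gradient ω x) x₀)
    (h0 : ω x₀ = 0)
    (hne : gradient ω x₀ ≠ 0) :
    (fun x => ω x / Real.sqrt (ω x ^ 2 + ‖gradient ω x‖ ^ 2)) x₀ = 0 ∧
      gradient (fun x => ω x / Real.sqrt (ω x ^ 2 + ‖gradient ω x‖ ^ 2)) x₀ =
        ‖gradient ω x₀‖⁻¹ • gradient ω x₀ ∧
      ‖gradient (fun x => ω x / Real.sqrt (ω x ^ 2 + ‖gradient ω x‖ ^ 2)) x₀‖ = 1 := by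
  have hn : ‖gradient ω x₀‖ ≠ 0 := norm_ne_zero_iff.mpr hne
  have hs : DifferentiableAt ℝ
      (fun x => (Real.sqrt (ω x ^ 2 + ‖gradient ω x‖ ^ 2))⁻¹) x₀ := by
    have hr : 0 < ω x₀ ^ 2 + ‖gradient ω x₀‖ ^ 2 := by
      have := norm_pos_iff.mpr hne
      positivity
    exact ((((hω x₀).pow 2).add (hgrad.norm_sq ℝ)).sqrt hr.ne').inv
      (Real.sqrt_ne_zero'.mpr hr)
  -- Since `ω x₀ = 0`, the derivative of the normalizing factor drops out of the product rule.
  have hg : HasGradientAt (fun x => ω x / Real.sqrt (ω x ^ 2 + ‖gradient ω x‖ ^ 2))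
      (‖gradient ω x₀‖⁻¹ • gradient ω x₀) x₀ := by
    rw [hasGradientAt_iff_hasFDerivAt]
    have h := (hω x₀).hasGradientAt.hasFDerivAt.mul hs.hasFDerivAt
    simp only [div_eq_mul_inv]
    refine h.congr_fderiv ?_
    simp [h0, Real.sqrt_sq]
  refine ⟨by simp [h0], hg.gradient, ?_⟩
  rw [hg.gradient, norm_smul, norm_inv, norm_norm, inv_mul_cancel₀ hn]
end

section
/- Let x₁ = (a₁, b₁) and x₂ = (a₂, b₂) be distinct points in ℝ², L = ‖x₂ − x₁‖ the length of the segment and x_c = (x₁ + x₂)/2 its midpoint. For x = (a, b) ∈ ℝ² define the signed distance to the line f(x) = ((a − a₁)(b₂ − b₁) − (b − b₁)(a₂ − a₁))/L, the trimming function t(x) = ((L/2)² − ‖x − x_c‖²)/L, and the approximate distance function to the segment φ(x) = √( f(x)² + ((√(t(x)² + f(x)⁴) − t(x))/2)² ). Then φ(x) ≥ 0 for all x, and φ(x) = 0 if and only if x lies on the closed line segment joining x₁ and x₂. -/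
/-!
The square root defining `φ` vanishes iff both squares under it do, i.e. iff `f x = 0` and
`√(t x ^ 2) = t x`, the latter meaning `0 ≤ t x`. So the zero set of `φ` is the intersection of
the line through `x₁, x₂` with the closed disk having the segment as a diameter. Writing
`(u, v) = x₂ - x₁` and `(c, d) = x - x₁`, the line condition is `c * v = d * u` and the disk
condition is `c ^ 2 + d ^ 2 ≤ c * u + d * v`; on the line `(c, d) = s • (u, v)` with
`s = (c * u + d * v) / (u ^ 2 + v ^ 2)`, and the disk condition becomes `s ^ 2 ≤ s`, that is
`s ∈ [0, 1]`.
-/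

/-- The trimmed distance expression vanishes exactly where the line distance
`f` is zero and the trimming value `t` is nonnegative. -/
theorem sqrt_trimmed_eq_zero_iff (f t : ℝ) :
    Real.sqrt (f ^ 2 + ((Real.sqrt (t ^ 2 + f ^ 4) - t) / 2) ^ 2) = 0 ↔ f = 0 ∧ 0 ≤ t := by
  rw [Real.sqrt_eq_zero (by positivity)]
  constructor
  · intro h
    have hf : f = 0 := by
      have : f ^ 2 = 0 := le_antisymm
        (by linarith [sq_nonneg ((Real.sqrt (t ^ 2 + f ^ 4) - t) / 2)]) (sq_nonneg f)
      simpa using this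
    subst hf
    refine ⟨rfl, ?_⟩
    have h' : Real.sqrt (t ^ 2 + 0 ^ 4) - t = 0 := by simpa using h
    linarith [Real.sqrt_nonneg (t ^ 2 + 0 ^ 4)]
  · rintro ⟨rfl, ht⟩
    simp [Real.sqrt_sq ht]

/-- The segment from `0` to `(u, v)` is the intersection of the line spanned by `(u, v)` with
the closed disk having that segment as a diameter. -/
theorem line_and_disk_iff (u v c d : ℝ) (huv : 0 < u ^ 2 + v ^ 2) :
    (c * v - d * u = 0 ∧ c ^ 2 + d ^ 2 ≤ c * u + d * v) ↔
      ∃ s : ℝ, (0 ≤ s ∧ s ≤ 1) ∧ c = s * u ∧ d = s * v := by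
  constructor
  · rintro ⟨hline, hdisk⟩
    obtain ⟨s, hs⟩ : ∃ s : ℝ, s * (u ^ 2 + v ^ 2) = c * u + d * v :=
      ⟨(c * u + d * v) / (u ^ 2 + v ^ 2), div_mul_cancel₀ _ huv.ne'⟩
    have hc : c = s * u := mul_right_cancel₀ huv.ne' (by linear_combination v * hline - u * hs)
    have hd : d = s * v := mul_right_cancel₀ huv.ne' (by linear_combination -u * hline - v * hs)
    have hss : s ^ 2 ≤ s := by
      refine le_of_mul_le_mul_right ?_ huv
      rw [hc, hd] at hdisk
      linarith
    exact ⟨s, ⟨by nlinarith, by nlinarith⟩, hc, hd⟩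
  · rintro ⟨s, ⟨h0, h1⟩, rfl, rfl⟩
    refine ⟨by ring, ?_⟩
    nlinarith [mul_nonneg (mul_nonneg h0 (sub_nonneg.2 h1)) huv.le]

/-- The approximate distance function to a line segment, built from the signed distance `f`
to the line through `x₁, x₂` and the trimming function `t`, is nonnegative everywhere and
vanishes exactly on the closed segment joining `x₁` and `x₂`. -/
theorem segment_approximate_distance_function
    (x₁ x₂ : EuclideanSpace ℝ (Fin 2)) (hne : x₁ ≠ x₂)
    (L : ℝ) (hL : L = ‖x₂ - x₁‖)
    (xc : EuclideanSpace ℝ (Fin 2)) (hxc : xc = (1 / 2 : ℝ) • (x₁ + x₂))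
    (f t φ : EuclideanSpace ℝ (Fin 2) → ℝ)
    (hf : ∀ x, f x = ((x 0 - x₁ 0) * (x₂ 1 - x₁ 1) - (x 1 - x₁ 1) * (x₂ 0 - x₁ 0)) / L)
    (ht : ∀ x, t x = ((L / 2) ^ 2 - ‖x - xc‖ ^ 2) / L)
    (hφ : ∀ x, φ x =
      Real.sqrt (f x ^ 2 + ((Real.sqrt (t x ^ 2 + f x ^ 4) - t x) / 2) ^ 2)) :
    ∀ x, 0 ≤ φ x ∧ (φ x = 0 ↔ x ∈ segment ℝ x₁ x₂) := by
  intro x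
  have hLpos : 0 < L := by
    rw [hL]
    exact norm_pos_iff.2 (sub_ne_zero.2 hne.symm)
  have hLsq : L ^ 2 = (x₂ 0 - x₁ 0) ^ 2 + (x₂ 1 - x₁ 1) ^ 2 := by
    rw [hL, EuclideanSpace.real_norm_sq_eq, Fin.sum_univ_two]
    simp
  have hdist : ‖x - xc‖ ^ 2 =
      (x 0 - (x₁ 0 + x₂ 0) / 2) ^ 2 + (x 1 - (x₁ 1 + x₂ 1) / 2) ^ 2 := by
    rw [hxc, EuclideanSpace.real_norm_sq_eq, Fin.sum_univ_two]
    simp only [PiLp.sub_apply, PiLp.smul_apply, PiLp.add_apply, smul_eq_mul]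
    ring
  have hf0 : f x = 0 ↔
      (x 0 - x₁ 0) * (x₂ 1 - x₁ 1) - (x 1 - x₁ 1) * (x₂ 0 - x₁ 0) = 0 := by
    rw [hf, div_eq_zero_iff, or_iff_left hLpos.ne']
  have ht0 : 0 ≤ t x ↔ (x 0 - x₁ 0) ^ 2 + (x 1 - x₁ 1) ^ 2 ≤
      (x 0 - x₁ 0) * (x₂ 0 - x₁ 0) + (x 1 - x₁ 1) * (x₂ 1 - x₁ 1) := by
    rw [ht, le_div_iff₀ hLpos, zero_mul, hdist, div_pow, hLsq]
    constructor <;> intro h <;> linarith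
  refine ⟨by rw [hφ]; exact Real.sqrt_nonneg _, ?_⟩
  rw [hφ, sqrt_trimmed_eq_zero_iff, hf0, ht0, line_and_disk_iff _ _ _ _ (hLsq ▸ by positivity),
    segment_eq_image']
  refine exists_congr fun s => and_congr Iff.rfl ?_
  constructor
  · rintro ⟨h0, h1⟩
    ext i
    fin_cases i
    · simp only [Fin.zero_eta, PiLp.add_apply, PiLp.smul_apply, PiLp.sub_apply, smul_eq_mul]
      linarith
    · simp only [Fin.mk_one, PiLp.add_apply, PiLp.smul_apply, PiLp.sub_apply, smul_eq_mul]
      linarith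
  · rintro rfl
    simp
end
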